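/- arXiv:2302.12300 — 2 statements merged into one kernel-verified Lean document; each statement's English description precedes it below -/
import Mathlib

section
/- Let (X, M) be a measurable space, μ₁ a semi-finite positive measure on (X, M), μ₂ a positive Borel measure on ℝ, and μ₃ a positive measure on (X, M) whose absolutely continuous part with respect to μ₁ has a density ψ : X → [0,∞) with respect to μ₁. Let N : X → ℝ be M-measurable and let 1 ≤ q < ∞. Set B₁ := sup_{r∈ℝ} μ₂([r,+∞))^{1/q} · essSup_{μ₁}( 1_{{N<r}} · ψ^{−1} ), where essSup_{μ₁} denotes the μ₁-essential supremum and 1_{{N<r}} is the indicator of {x : N(x) < r}. Then there is a finite constant C ≥ 0 such that (∫_ℝ (∫_{{x : N(x)<r}} f(x) dμ₁(x))^q dμ₂(r))^{1/q} ≤ C ∫_X f(x) dμ₃(x) for every M-measurable f : X → [0,+∞] if and only if B₁ is finite; moreover the minimal such constant C equals B₁. -/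
open MeasureTheory ENNReal
open scoped NNReal

/-!
Sufficiency: for fixed `f`, put `ν = f • μ₁`. Minkowski's integral inequality bounds the left-hand
side by `∫ μ₂((N x, ∞))^{1/q} dν(x)`, and finiteness of `B₁` gives `μ₂((N x, ∞))^{1/q} ≤ B₁ ψ(x)`
for almost every `x`. Since neither `ν` nor `μ₂` need be σ-finite, Tonelli is not available for
Minkowski's inequality; instead, the kernel `1_{N x < r}` is the increasing limit of kernels that
are simple functions of `x`, for which it is the triangle inequality of a finite sum.

Necessity: test the inequality with indicators of sets `F ⊆ {N < r}` of positive finite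
`μ₁`-measure that avoid the singular part of `μ₃` and on which `ψ⁻¹` exceeds a number close to its
essential supremum.
-/

section MinkowskiIntegral

variable {X Z : Type*} [MeasurableSpace X] [MeasurableSpace Z]
  {μ : Measure Z} {ν : Measure X} {q : ℝ}

lemma lintegral_Lp_finsetSum_le {ι : Type*} (s : Finset ι) {a : ι → Z → ℝ≥0∞}
    (ha : ∀ i, Measurable (a i)) (hq : 1 ≤ q) :
    (∫⁻ z, (∑ i ∈ s, a i z) ^ q ∂μ) ^ (1 / q) ≤ ∑ i ∈ s, (∫⁻ z, a i z ^ q ∂μ) ^ (1 / q) := by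
  simpa [eLpNorm'] using
    eLpNorm'_sum_le (s := s) (fun i _ => (ha i).aestronglyMeasurable (μ := μ)) hq

lemma lintegral_mul_const_Lp {h : Z → ℝ≥0∞} (hh : Measurable h) (c : ℝ≥0∞) (hq : 0 < q) :
    (∫⁻ z, (h z * c) ^ q ∂μ) ^ (1 / q) = (∫⁻ z, h z ^ q ∂μ) ^ (1 / q) * c := by
  simp only [mul_rpow_of_nonneg _ _ hq.le]
  rw [lintegral_mul_const _ (hh.pow_const q), mul_rpow_of_nonneg _ _ (by positivity),
    ← rpow_mul, mul_one_div_cancel hq.ne', rpow_one]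

lemma lintegral_Lp_lintegral_comp_simpleFunc_le {β : Type*} (g : SimpleFunc X β)
    {K : β → Z → ℝ≥0∞} (hK : ∀ b, Measurable (K b)) (hq : 1 ≤ q) :
    (∫⁻ z, (∫⁻ x, K (g x) z ∂ν) ^ q ∂μ) ^ (1 / q) ≤
      ∫⁻ x, (∫⁻ z, K (g x) z ^ q ∂μ) ^ (1 / q) ∂ν := by
  have lintegral_comp (G : β → ℝ≥0∞) :
      ∫⁻ x, G (g x) ∂ν = ∑ b ∈ g.range, G b * ν (g ⁻¹' {b}) := by
    rw [← SimpleFunc.map_lintegral, ← SimpleFunc.lintegral_eq_lintegral, SimpleFunc.coe_map]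
    rfl
  calc (∫⁻ z, (∫⁻ x, K (g x) z ∂ν) ^ q ∂μ) ^ (1 / q)
      = (∫⁻ z, (∑ b ∈ g.range, K b z * ν (g ⁻¹' {b})) ^ q ∂μ) ^ (1 / q) := by
        simp only [fun z => lintegral_comp fun b => K b z]
    _ ≤ ∑ b ∈ g.range, (∫⁻ z, (K b z * ν (g ⁻¹' {b})) ^ q ∂μ) ^ (1 / q) :=
        lintegral_Lp_finsetSum_le _ (fun b => (hK b).mul_const _) hq
    _ = ∑ b ∈ g.range, (∫⁻ z, K b z ^ q ∂μ) ^ (1 / q) * ν (g ⁻¹' {b}) := by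
        simp only [lintegral_mul_const_Lp (hK _) _ (by positivity : 0 < q)]
    _ = ∫⁻ x, (∫⁻ z, K (g x) z ^ q ∂μ) ^ (1 / q) ∂ν :=
        (lintegral_comp fun b => (∫⁻ z, K b z ^ q ∂μ) ^ (1 / q)).symm

lemma lintegral_Lp_measure_lt_simpleFunc_le (u : SimpleFunc X ℝ≥0∞) {w : Z → ℝ≥0∞}
    (hw : Measurable w) (hq : 1 ≤ q) :
    (∫⁻ z, ν {x | w z < u x} ^ q ∂μ) ^ (1 / q) ≤
      ∫⁻ x, μ {z | w z < u x} ^ (1 / q) ∂ν := by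
  have hq0 : 0 < q := by positivity
  have hsub (c : ℝ≥0∞) : MeasurableSet {z | w z < c} := measurableSet_lt hw measurable_const
  have hsup (c : ℝ≥0∞) : MeasurableSet {x | c < u x} :=
    measurableSet_lt measurable_const u.measurable
  have inner_left (z : Z) :
      ∫⁻ x, {z | w z < u x}.indicator 1 z ∂ν = ν {x | w z < u x} := by
    rw [← lintegral_indicator_one (hsup _)]
    rfl
  have inner_right (c : ℝ≥0∞) :
      ∫⁻ z, {z | w z < c}.indicator (1 : Z → ℝ≥0∞) z ^ q ∂μ = μ {z | w z < c} := by
    rw [← lintegral_indicator_one (hsub c)]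
    congr with z
    by_cases hz : w z < c <;> simp [hz, hq0]
  simpa only [inner_left, inner_right] using
    lintegral_Lp_lintegral_comp_simpleFunc_le (μ := μ) (ν := ν) u
      (K := fun c => {z | w z < c}.indicator 1) (fun c => measurable_one.indicator (hsub c)) hq

lemma rpow_iSup_of_pos {ι : Sort*} (a : ι → ℝ≥0∞) (hq : 0 < q) :
    (⨆ i, a i) ^ q = ⨆ i, a i ^ q :=
  (orderIsoRpow q hq).map_iSup a

lemma monotone_setOf_lt_eapprox (u : X → ℝ≥0∞) (c : ℝ≥0∞) :
    Monotone fun n => {x | c < SimpleFunc.eapprox u n x} :=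
  fun _ _ hmn x hx => lt_of_lt_of_le hx (SimpleFunc.monotone_eapprox u hmn x)

lemma measure_lt_eq_iSup_eapprox {u : X → ℝ≥0∞} (hu : Measurable u) (c : ℝ≥0∞) :
    ν {x | c < u x} = ⨆ n, ν {x | c < SimpleFunc.eapprox u n x} := by
  rw [← (monotone_setOf_lt_eapprox u c).measure_iUnion]
  congr 1 with x
  simp [← SimpleFunc.iSup_eapprox_apply hu x, lt_iSup_iff]

lemma lintegral_Lp_measure_lt_le {u : X → ℝ≥0∞} (hu : Measurable u) {w : Z → ℝ≥0∞}
    (hw : Measurable w) (hq : 1 ≤ q) :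
    (∫⁻ z, ν {x | w z < u x} ^ q ∂μ) ^ (1 / q) ≤
      ∫⁻ x, μ {z | w z < u x} ^ (1 / q) ∂ν := by
  have hq0 : 0 < q := by positivity
  have measure_measurable (n : ℕ) : Measurable fun z => ν {x | w z < SimpleFunc.eapprox u n x} :=
    Antitone.measurable (f := fun c => ν {x | c < SimpleFunc.eapprox u n x})
      (fun _ _ hcd => measure_mono fun _ hx => hcd.trans_lt hx) |>.comp hw
  have measure_mono_eapprox :
      Monotone fun n z => ν {x | w z < SimpleFunc.eapprox u n x} ^ q := fun _ _ hmn z =>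
    rpow_le_rpow (measure_mono (monotone_setOf_lt_eapprox u (w z) hmn)) hq0.le
  have eapprox_le (n : ℕ) (x : X) : SimpleFunc.eapprox u n x ≤ u x :=
    (le_iSup _ n).trans_eq (SimpleFunc.iSup_eapprox_apply hu x)
  simp only [measure_lt_eq_iSup_eapprox hu, rpow_iSup_of_pos _ hq0]
  rw [lintegral_iSup (fun n => (measure_measurable n).pow_const q) measure_mono_eapprox,
    rpow_iSup_of_pos _ (by positivity)]
  refine iSup_le fun n => (lintegral_Lp_measure_lt_simpleFunc_le _ hw hq).trans ?_
  gcongr with x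
  exact eapprox_le n x

lemma lintegral_Lp_measure_lt_real_le {μ : Measure ℝ} {N : X → ℝ} (hN : Measurable N) (hq : 1 ≤ q) :
    (∫⁻ r, ν {x | N x < r} ^ q ∂μ) ^ (1 / q) ≤
      ∫⁻ x, μ (Set.Ioi (N x)) ^ (1 / q) ∂ν := by
  -- `exp (-·)` reverses the order, so that approximating it from below approximates `N` from above.
  have lt_iff (s r : ℝ) :
      ENNReal.ofReal (Real.exp (-r)) < ENNReal.ofReal (Real.exp (-s)) ↔ s < r := by
    simp [ofReal_lt_ofReal_iff, Real.exp_pos]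
  have minkowski := lintegral_Lp_measure_lt_le (μ := μ) (ν := ν)
    (u := fun x => ENNReal.ofReal (Real.exp (-N x)))
    (w := fun r => ENNReal.ofReal (Real.exp (-r))) (by fun_prop) (by fun_prop) hq
  simp only [lt_iff] at minkowski
  exact minkowski

end MinkowskiIntegral

section TestSets

variable {X : Type*} [MeasurableSpace X]

/-- A measure is semi-finite if every measurable set of infinite measure contains a measurable
subset of positive finite measure. -/
def IsSemifinite (μ : Measure X) : Prop :=
  ∀ E : Set X, MeasurableSet E → μ E = ⊤ → ∃ F, F ⊆ E ∧ MeasurableSet F ∧ 0 < μ F ∧ μ F < ⊤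

variable {μ σ : Measure X}

lemma IsSemifinite.exists_subset_measure_pos_lt_top (hμ : IsSemifinite μ) {E : Set X}
    (hE : MeasurableSet E) (hE0 : μ E ≠ 0) :
    ∃ F, F ⊆ E ∧ MeasurableSet F ∧ 0 < μ F ∧ μ F < ⊤ := by
  by_cases hE_top : μ E = ⊤
  · exact hμ E hE hE_top
  · exact ⟨E, subset_rfl, hE, pos_iff_ne_zero.2 hE0, lt_top_iff_ne_top.2 hE_top⟩

lemma measure_inter_lt_ne_zero_of_lt_essSup_indicator {A : Set X} {g : X → ℝ≥0∞} {b : ℝ≥0∞}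
    (hb : b < essSup (A.indicator g) μ) : μ (A ∩ {x | b < g x}) ≠ 0 := by
  refine fun hnull => hb.not_ge (essSup_le_of_ae_le b ?_)
  filter_upwards [measure_eq_zero_iff_ae_notMem.1 hnull] with x hx
  have le_of_mem (hxA : x ∈ A) : g x ≤ b := not_lt.1 fun hlt => hx ⟨hxA, hlt⟩
  exact Set.indicator_apply_le (g := fun _ => b) le_of_mem

lemma mul_essSup_indicator_inv_le_of_forall_measure_le (hμ : IsSemifinite μ)
    (hσ : σ.MutuallySingular μ) {ψ : X → ℝ≥0∞} (hψ : Measurable ψ) {A : Set X}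
    (hA : MeasurableSet A) {m C : ℝ≥0∞}
    (hm : ∀ F ⊆ A, MeasurableSet F → m * μ F ≤ C * (μ.withDensity ψ + σ) F) :
    m * essSup (A.indicator fun x => (ψ x)⁻¹) μ ≤ C := by
  refine mul_le_of_forall_lt fun a ha b hb => (mul_le_mul_left ha.le b).trans ?_
  rcases eq_or_ne b 0 with rfl | hb0
  · simp
  obtain ⟨S, hS, hσS, hμS⟩ := hσ
  have hE : MeasurableSet (A ∩ {x | b < (ψ x)⁻¹} ∩ S) :=
    (hA.inter (measurableSet_lt measurable_const hψ.inv)).inter hS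
  have hE0 : μ (A ∩ {x | b < (ψ x)⁻¹} ∩ S) ≠ 0 := by
    rw [measure_inter_conull hμS]
    exact measure_inter_lt_ne_zero_of_lt_essSup_indicator hb
  obtain ⟨F, hFE, hF, hF_pos, hF_top⟩ := hμ.exists_subset_measure_pos_lt_top hE hE0
  have density_le : (μ.withDensity ψ + σ) F ≤ b⁻¹ * μ F := by
    rw [Measure.add_apply, measure_mono_null (fun x hx => (hFE hx).2) hσS, add_zero,
      withDensity_apply _ hF, ← setLIntegral_const]
    exact setLIntegral_mono measurable_const fun x hx => (lt_inv_iff_lt_inv.1 (hFE hx).1.2).le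
  have mul_le : m * μ F ≤ C / b * μ F :=
    calc m * μ F ≤ C * (μ.withDensity ψ + σ) F := hm F (fun x hx => (hFE hx).1.1) hF
      _ ≤ C * (b⁻¹ * μ F) := by gcongr
      _ = C / b * μ F := by rw [← mul_assoc, div_eq_mul_inv]
  exact (ENNReal.le_div_iff_mul_le (.inl hb0) (.inl hb.ne_top)).1
    ((ENNReal.mul_le_mul_iff_left hF_pos.ne' hF_top.ne).1 mul_le)

end TestSets

section Hardy

variable {X : Type*} [MeasurableSpace X]

/-- The Hardy inequality with constant `C` (and `p = 1`) for the operator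
`f ↦ (r ↦ ∫_{N < r} f dμ₁)` from `L¹(μ₃)` to `L^q(μ₂)`, stated for nonnegative functions. -/
def HardyInequality (μ₁ μ₃ : Measure X) (μ₂ : Measure ℝ) (N : X → ℝ) (q : ℝ) (C : ℝ≥0∞) : Prop :=
  ∀ f : X → ℝ≥0∞, Measurable f →
    (∫⁻ r, (∫⁻ x in {x | N x < r}, f x ∂μ₁) ^ q ∂μ₂) ^ (1 / q) ≤ C * ∫⁻ x, f x ∂μ₃

/-- The constant `B₁`, which turns out to be the optimal constant in the Hardy inequality. The
inverse is taken in `ℝ≥0∞`, so it is `⊤` where `ψ` vanishes. -/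
noncomputable def hardyConst (μ₁ : Measure X) (μ₂ : Measure ℝ) (ψ : X → ℝ≥0∞) (N : X → ℝ) (q : ℝ) :
    ℝ≥0∞ :=
  ⨆ r : ℝ, μ₂ (Set.Ici r) ^ (1 / q) *
    essSup (Set.indicator {x | N x < r} (fun x => (ψ x)⁻¹)) μ₁

variable {μ₁ μ₃ : Measure X} {μ₂ : Measure ℝ} {ψ : X → ℝ≥0∞} {N : X → ℝ} {q : ℝ}

lemma measure_Ioi_le_of_forall_rat {c : ℝ≥0∞} {s : ℝ}
    (h : ∀ t : ℚ, s < t → μ₂ (Set.Ici (t : ℝ)) ≤ c) : μ₂ (Set.Ioi s) ≤ c := by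
  have Ioi_eq : Set.Ioi s = ⋃ t ∈ {t : ℚ | s < t}, Set.Ici (t : ℝ) := by
    ext r
    simp only [Set.mem_Ioi, Set.mem_iUnion, Set.mem_Ici, Set.mem_ofPred_eq, exists_prop]
    exact ⟨fun hr => (exists_rat_btwn hr).imp fun t ht => ⟨ht.1, ht.2.le⟩,
      fun ⟨t, hst, htr⟩ => hst.trans_le htr⟩
  have directed : DirectedOn (Function.onFun (· ⊆ ·) fun t : ℚ => Set.Ici (t : ℝ))
      {t : ℚ | s < t} := fun t ht t' ht' =>
    ⟨min t t', by rcases min_choice t t' with h | h <;> simpa only [h],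
      Set.Ici_subset_Ici.2 (mod_cast min_le_left t t'),
      Set.Ici_subset_Ici.2 (mod_cast min_le_right t t')⟩
  rw [Ioi_eq, measure_biUnion_eq_iSup (Set.to_countable _) directed]
  exact iSup₂_le h

lemma ae_measure_Ioi_rpow_le_hardyConst_mul (hq : 0 < q) (hψ : ∀ᵐ x ∂μ₁, ψ x ≠ ⊤)
    (hB : hardyConst μ₁ μ₂ ψ N q ≠ ⊤) :
    ∀ᵐ x ∂μ₁, μ₂ (Set.Ioi (N x)) ^ (1 / q) ≤ hardyConst μ₁ μ₂ ψ N q * ψ x := by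
  have ae_le_essSup_rat : ∀ᵐ x ∂μ₁, ∀ t : ℚ, {x | N x < t}.indicator (fun x => (ψ x)⁻¹) x ≤
      essSup ({x | N x < t}.indicator fun x => (ψ x)⁻¹) μ₁ :=
    ae_all_iff.2 fun t => ENNReal.ae_le_essSup _
  filter_upwards [ae_le_essSup_rat, hψ] with x hx hψx
  rw [one_div, rpow_inv_le_iff hq]
  refine measure_Ioi_le_of_forall_rat fun t ht => ?_
  rw [← rpow_inv_le_iff hq, ← one_div, ← ENNReal.div_le_iff_le_mul (.inr hB) (.inl hψx),
    div_eq_mul_inv]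
  have inv_le := hx t
  rw [Set.indicator_of_mem (show x ∈ {x | N x < t} from ht)] at inv_le
  calc μ₂ (Set.Ici (t : ℝ)) ^ (1 / q) * (ψ x)⁻¹
      ≤ μ₂ (Set.Ici (t : ℝ)) ^ (1 / q) *
          essSup ({x | N x < t}.indicator fun x => (ψ x)⁻¹) μ₁ := by gcongr
    _ ≤ hardyConst μ₁ μ₂ ψ N q := le_iSup (fun r : ℝ => μ₂ (Set.Ici r) ^ (1 / q) *
          essSup ({x | N x < r}.indicator fun x => (ψ x)⁻¹) μ₁) t

lemma hardyInequality_hardyConst (hψ : Measurable ψ) (hψ_top : ∀ᵐ x ∂μ₁, ψ x ≠ ⊤)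
    (hψμ₃ : μ₁.withDensity ψ ≤ μ₃) (hN : Measurable N) (hq : 1 ≤ q)
    (hB : hardyConst μ₁ μ₂ ψ N q ≠ ⊤) :
    HardyInequality μ₁ μ₃ μ₂ N q (hardyConst μ₁ μ₂ ψ N q) := by
  intro f hf
  have ae_le : ∀ᵐ x ∂μ₁.withDensity f,
      μ₂ (Set.Ioi (N x)) ^ (1 / q) ≤ hardyConst μ₁ μ₂ ψ N q * ψ x :=
    (withDensity_absolutelyContinuous μ₁ f).ae_le
      (ae_measure_Ioi_rpow_le_hardyConst_mul (by positivity) hψ_top hB)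
  calc (∫⁻ r, (∫⁻ x in {x | N x < r}, f x ∂μ₁) ^ q ∂μ₂) ^ (1 / q)
      = (∫⁻ r, μ₁.withDensity f {x | N x < r} ^ q ∂μ₂) ^ (1 / q) := by
        simp only [withDensity_apply f (measurableSet_lt hN measurable_const)]
    _ ≤ ∫⁻ x, μ₂ (Set.Ioi (N x)) ^ (1 / q) ∂μ₁.withDensity f :=
        lintegral_Lp_measure_lt_real_le hN hq
    _ ≤ ∫⁻ x, hardyConst μ₁ μ₂ ψ N q * ψ x ∂μ₁.withDensity f := lintegral_mono_ae ae_le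
    _ = hardyConst μ₁ μ₂ ψ N q * ∫⁻ x, f x ∂μ₁.withDensity ψ := by
        rw [lintegral_const_mul _ hψ, lintegral_withDensity_eq_lintegral_mul _ hf hψ,
          lintegral_withDensity_eq_lintegral_mul _ hψ hf, mul_comm f ψ]
    _ ≤ hardyConst μ₁ μ₂ ψ N q * ∫⁻ x, f x ∂μ₃ := by gcongr

namespace HardyInequality

lemma measure_Ici_rpow_mul_measure_le {C : ℝ≥0∞} (h : HardyInequality μ₁ μ₃ μ₂ N q C)
    (hq : 0 < q) {r : ℝ} {F : Set X} (hF : MeasurableSet F) (hFr : F ⊆ {x | N x < r}) :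
    μ₂ (Set.Ici r) ^ (1 / q) * μ₁ F ≤ C * μ₃ F := by
  have inner_eq {s : ℝ} (hs : r ≤ s) : ∫⁻ x in {x | N x < s}, F.indicator 1 x ∂μ₁ = μ₁ F := by
    have hFs : F ⊆ {x | N x < s} := fun x hx => lt_of_lt_of_le (hFr hx) hs
    rw [lintegral_indicator_one hF, Measure.restrict_apply hF, Set.inter_eq_left.2 hFs]
  calc μ₂ (Set.Ici r) ^ (1 / q) * μ₁ F
      = (∫⁻ _ in Set.Ici r, μ₁ F ^ q ∂μ₂) ^ (1 / q) := by
        rw [setLIntegral_const, mul_rpow_of_nonneg _ _ (by positivity), ← rpow_mul,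
          mul_one_div_cancel hq.ne', rpow_one, mul_comm]
    _ = (∫⁻ s in Set.Ici r, (∫⁻ x in {x | N x < s}, F.indicator 1 x ∂μ₁) ^ q ∂μ₂) ^ (1 / q) := by
        congr 1
        exact setLIntegral_congr_fun measurableSet_Ici fun s hs => by simp only [inner_eq hs]
    _ ≤ (∫⁻ s, (∫⁻ x in {x | N x < s}, F.indicator 1 x ∂μ₁) ^ q ∂μ₂) ^ (1 / q) := by
        gcongr
        exact Measure.restrict_le_self
    _ ≤ C * ∫⁻ x, F.indicator 1 x ∂μ₃ := h _ (measurable_one.indicator hF)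
    _ = C * μ₃ F := by rw [lintegral_indicator_one hF]

lemma hardyConst_le {σ : Measure X} {C : ℝ≥0∞}
    (h : HardyInequality μ₁ (μ₁.withDensity ψ + σ) μ₂ N q C) (hμ₁ : IsSemifinite μ₁)
    (hσ : σ.MutuallySingular μ₁) (hψ : Measurable ψ) (hN : Measurable N) (hq : 0 < q) :
    hardyConst μ₁ μ₂ ψ N q ≤ C :=
  iSup_le fun _ => mul_essSup_indicator_inv_le_of_forall_measure_le hμ₁ hσ hψ
    (measurableSet_lt hN measurable_const) fun _ hFr hF =>
      h.measure_Ici_rpow_mul_measure_le hq hF hFr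

end HardyInequality

end Hardy

/-- The case `p = 1` of the general Hardy inequality: the inequality
holds with some finite constant iff `B₁` is finite, and the minimal constant equals `B₁`. -/
theorem general_hardy_inequality_p_eq_one
    {X : Type*} [MeasurableSpace X]
    (μ₁ μ₃ : Measure X) (μ₂ : Measure ℝ)
    (hsf : ∀ E : Set X, MeasurableSet E → μ₁ E = ⊤ →
      ∃ F, F ⊆ E ∧ MeasurableSet F ∧ 0 < μ₁ F ∧ μ₁ F < ⊤)
    (ψ : X → ℝ≥0) (hψ : Measurable ψ)
    (σ : Measure X) (hσ : σ.MutuallySingular μ₁)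
    (hdec : μ₃ = μ₁.withDensity (fun x => (ψ x : ℝ≥0∞)) + σ)
    (N : X → ℝ) (hN : Measurable N)
    (q : ℝ) (hq : 1 ≤ q)
    (B₁ : ℝ≥0∞)
    (hB₁ : B₁ = ⨆ r : ℝ, μ₂ (Set.Ici r) ^ (1 / q) *
      essSup (Set.indicator {x | N x < r} (fun x => ((ψ x : ℝ≥0∞))⁻¹)) μ₁) :
    ((∃ C : ℝ≥0∞, C ≠ ⊤ ∧ ∀ f : X → ℝ≥0∞, Measurable f →
        (∫⁻ r, (∫⁻ x in {x | N x < r}, f x ∂μ₁) ^ q ∂μ₂) ^ (1 / q) ≤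
          C * ∫⁻ x, f x ∂μ₃) ↔ B₁ ≠ ⊤) ∧
      (B₁ ≠ ⊤ → IsLeast {C : ℝ≥0∞ | ∀ f : X → ℝ≥0∞, Measurable f →
        (∫⁻ r, (∫⁻ x in {x | N x < r}, f x ∂μ₁) ^ q ∂μ₂) ^ (1 / q) ≤
          C * ∫⁻ x, f x ∂μ₃} B₁) := by
  subst hdec hB₁
  have hψ_coe : Measurable fun x => (ψ x : ℝ≥0∞) := hψ.coe_nnreal_ennreal
  have hardy_of_ne_top (hB : hardyConst μ₁ μ₂ (fun x => ψ x) N q ≠ ⊤) :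
      HardyInequality μ₁ (μ₁.withDensity (fun x => ψ x) + σ) μ₂ N q
        (hardyConst μ₁ μ₂ (fun x => ψ x) N q) :=
    hardyInequality_hardyConst hψ_coe (.of_forall fun _ => coe_ne_top)
      (Measure.le_add_right le_rfl) hN hq hB
  have hardyConst_le_of_hardy (C : ℝ≥0∞)
      (hC : HardyInequality μ₁ (μ₁.withDensity (fun x => ψ x) + σ) μ₂ N q C) :
      hardyConst μ₁ μ₂ (fun x => ψ x) N q ≤ C :=
    hC.hardyConst_le hsf hσ hψ_coe hN (by positivity)
  exact ⟨⟨fun ⟨C, hC_top, hC⟩ => ne_top_of_le_ne_top hC_top (hardyConst_le_of_hardy C hC),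
      fun hB => ⟨_, hB, hardy_of_ne_top hB⟩⟩,
    fun hB => ⟨hardy_of_ne_top hB, hardyConst_le_of_hardy⟩⟩
end

section
/- Let μ₁ and μ₂ be finite Borel measures on ℝ with compact support, both diffuse (i.e., μᵢ({x}) = 0 for every x ∈ ℝ). Let 1 < p ≤ q < ∞ with p' = p/(p−1). If B := sup_{r∈ℝ} μ₂([r,+∞))^{1/q} μ₁((−∞,r))^{1/p'} is finite, then for every Borel measurable function f : ℝ → [0,+∞], (∫_ℝ (∫_{(−∞,r)} f dμ₁)^q dμ₂(r))^{1/q} ≤ (p')^{1/p'} p^{1/q} B (∫_ℝ f^p dμ₁)^{1/p}. -/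
open MeasureTheory ENNReal
open scoped NNReal

/-!
By Hölder's inequality against the weight `μ (Iic s) ^ (1 / (p * p'))`,
`(∫ s in Iio r, f s ∂μ) ^ p` is at most `(p' * μ (Iio r) ^ (1 / p')) ^ (p - 1)` times
`∫ s in Iio r, f s ^ p * μ (Iic s) ^ (1 / p') ∂μ`, because
`∫ s in Iio r, μ (Iic s) ^ (-1 / p) ∂μ ≤ p' * μ (Iio r) ^ (1 / p')`: the superlevel sets of an
antitone function of `μ (Iic s)` are initial segments, so it integrates to at most the integral of
that function against Lebesgue measure. The definition of `B` trades `μ (Iio r) ^ (1 / p')` for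
`B * ν (Ici r) ^ (-1 / q)`. Minkowski's integral inequality with exponent `q / p ≥ 1` then moves the
`ν`-integral inside, where the same tail estimate for `ν` leaves
`ν (Ioi s) ^ (1 / q) * μ (Iic s) ^ (1 / p') ≤ B`. Weighting by closed half-lines rather than open
ones makes atoms harmless.
-/

open Set Function

section Integration

variable {α β : Type*} [MeasurableSpace α] [MeasurableSpace β] {μ : Measure α} {ν : Measure β}

theorem lintegral_eq_lintegral_measure_ofReal_lt [SFinite μ] {f : α → ℝ≥0∞} (hf : Measurable f) :
    ∫⁻ x, f x ∂μ = ∫⁻ t in Ioi (0 : ℝ), μ {x | ENNReal.ofReal t < f x} := by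
  have hmeas : MeasurableSet {z : α × ℝ | ENNReal.ofReal z.2 < f z.1} :=
    measurableSet_lt (by fun_prop) (by fun_prop)
  have volume_subgraph (y : ℝ≥0∞) :
      volume.restrict (Ioi 0) {t : ℝ | ENNReal.ofReal t < y} = y := by
    rw [Measure.restrict_apply (measurableSet_lt (by fun_prop) (by fun_prop))]
    induction y with
    | top => simp
    | coe y =>
      have : {t : ℝ | ENNReal.ofReal t < y} ∩ Ioi 0 = Ioo 0 (y : ℝ) := by
        ext t
        simp +contextual [ENNReal.ofReal_lt_coe_iff, and_comm, le_of_lt]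
      simp [this]
  calc ∫⁻ x, f x ∂μ
      = ∫⁻ x, volume.restrict (Ioi 0)
          (Prod.mk x ⁻¹' {z : α × ℝ | ENNReal.ofReal z.2 < f z.1}) ∂μ :=
        lintegral_congr fun x => (volume_subgraph (f x)).symm
    _ = ∫⁻ t in Ioi (0 : ℝ), μ {x | ENNReal.ofReal t < f x} := by
        rw [← Measure.prod_apply hmeas, Measure.prod_apply_symm hmeas]
        rfl

theorem lintegral_le_of_forall_lintegral_le [SigmaFinite μ] {f : α → ℝ≥0∞} {C : ℝ≥0∞}
    (h : ∀ g : α → ℝ≥0∞, Measurable g → g ≤ f → ∫⁻ x, g x ∂μ ≠ ⊤ → ∫⁻ x, g x ∂μ ≤ C) :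
    ∫⁻ x, f x ∂μ ≤ C := by
  rw [lintegral_eq_nnreal]
  refine iSup₂_le fun φ hφ => le_of_forall_lt fun L hL => ?_
  rw [← SimpleFunc.lintegral_eq_lintegral] at hL
  obtain ⟨g, hgφ, hg_top, hLg⟩ := SimpleFunc.exists_lt_lintegral_simpleFunc_of_lt_lintegral hL
  exact hLg.trans_le <| h (fun x => g x) (by fun_prop)
    (fun x => (ENNReal.coe_le_coe.2 (hgφ x)).trans (hφ x)) hg_top.ne

theorem rpow_inv_le_of_le_rpow_one_sub_inv_mul {m : ℝ} (hm : 1 ≤ m) {a b : ℝ≥0∞} (ha : a ≠ ⊤)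
    (h : a ≤ a ^ (1 - m⁻¹) * b) : a ^ m⁻¹ ≤ b := by
  have hm₀ : 0 < m⁻¹ := by positivity
  have hm₁ : 0 ≤ 1 - m⁻¹ := sub_nonneg.2 (inv_le_one_of_one_le₀ hm)
  rcases eq_or_ne a 0 with rfl | ha₀
  · simp [ENNReal.zero_rpow_of_pos hm₀]
  rw [← ENNReal.mul_le_mul_iff_right (a := a ^ (1 - m⁻¹))
      (by simp [ENNReal.rpow_eq_zero_iff, ha₀, ha]) (ENNReal.rpow_ne_top_of_nonneg hm₁ ha),
    ← ENNReal.rpow_add_of_nonneg _ _ hm₁ hm₀.le, sub_add_cancel, ENNReal.rpow_one]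
  exact h

theorem minkowski_lintegral_le [SFinite μ] [SigmaFinite ν] {K : β → α → ℝ≥0∞}
    (hK : Measurable (uncurry K)) {m : ℝ} (hm : 1 ≤ m) :
    (∫⁻ y, (∫⁻ x, K y x ∂μ) ^ m ∂ν) ^ m⁻¹ ≤ ∫⁻ x, (∫⁻ y, K y x ^ m ∂ν) ^ m⁻¹ ∂μ := by
  have hm₀ : 0 < m := by positivity
  have hm₁ : 0 ≤ 1 - m⁻¹ := sub_nonneg.2 (inv_le_one_of_one_le₀ hm)
  rw [ENNReal.rpow_inv_le_iff hm₀]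
  -- Hölder bounds `a = ∫ g` by `a ^ (1 - 1 / m)` times the right-hand side; testing with
  -- minorants `g` of finite integral makes it legitimate to divide by that power.
  refine lintegral_le_of_forall_lintegral_le fun g hg hgK hg_top => ?_
  rw [← ENNReal.rpow_inv_le_iff hm₀]
  refine rpow_inv_le_of_le_rpow_one_sub_inv_mul hm hg_top ?_
  calc ∫⁻ y, g y ∂ν
      = ∫⁻ y, g y ^ (1 - m⁻¹) * g y ^ m⁻¹ ∂ν := by
        simp [← ENNReal.rpow_add_of_nonneg _ _ hm₁ (inv_pos.2 hm₀).le]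
    _ ≤ ∫⁻ y, g y ^ (1 - m⁻¹) * ∫⁻ x, K y x ∂μ ∂ν := by
        gcongr with y
        exact (ENNReal.rpow_inv_le_iff hm₀).2 (hgK y)
    _ = ∫⁻ y, ∫⁻ x, g y ^ (1 - m⁻¹) * K y x ∂μ ∂ν :=
        lintegral_congr fun y => (lintegral_const_mul _ (by fun_prop)).symm
    _ = ∫⁻ x, ∫⁻ y, g y ^ (1 - m⁻¹) * (K y x ^ m) ^ m⁻¹ ∂ν ∂μ := by
        simp_rw [ENNReal.rpow_rpow_inv hm₀.ne']
        exact lintegral_lintegral_swap (by fun_prop)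
    _ ≤ ∫⁻ x, (∫⁻ y, g y ∂ν) ^ (1 - m⁻¹) * (∫⁻ y, K y x ^ m ∂ν) ^ m⁻¹ ∂μ := by
        gcongr with x
        exact ENNReal.lintegral_mul_norm_pow_le (by fun_prop) (by fun_prop) hm₁
          (inv_pos.2 hm₀).le (sub_add_cancel _ _)
    _ = (∫⁻ y, g y ∂ν) ^ (1 - m⁻¹) * ∫⁻ x, (∫⁻ y, K y x ^ m ∂ν) ^ m⁻¹ ∂μ :=
        lintegral_const_mul' _ _ (ENNReal.rpow_ne_top_of_nonneg hm₁ hg_top)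

theorem rpow_lintegral_le_rpow_mul_lintegral {p p' : ℝ} (hpp' : p.HolderConjugate p')
    {f v : α → ℝ≥0∞} (hf : Measurable f) (hv : Measurable v) (hv₀ : ∀ᵐ x ∂μ, v x ≠ 0)
    (hv_top : ∀ᵐ x ∂μ, v x ≠ ⊤) :
    (∫⁻ x, f x ∂μ) ^ p ≤
      (∫⁻ x, v x ^ (-p⁻¹) ∂μ) ^ (p - 1) * ∫⁻ x, f x ^ p * v x ^ p'⁻¹ ∂μ := by
  have hsplit : ∀ᵐ x ∂μ, f x = (v x ^ (-p⁻¹)) ^ p'⁻¹ * (f x ^ p * v x ^ p'⁻¹) ^ p⁻¹ := by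
    filter_upwards [hv₀, hv_top] with x hx₀ hx_top
    rw [ENNReal.mul_rpow_of_nonneg _ _ hpp'.inv_nonneg, ENNReal.rpow_rpow_inv hpp'.ne_zero,
      mul_left_comm, ← ENNReal.rpow_mul, ← ENNReal.rpow_mul, ← ENNReal.rpow_add _ _ hx₀ hx_top,
      show -p⁻¹ * p'⁻¹ + p'⁻¹ * p⁻¹ = 0 by ring, ENNReal.rpow_zero, mul_one]
  have hHolder : ∫⁻ x, f x ∂μ ≤
      (∫⁻ x, v x ^ (-p⁻¹) ∂μ) ^ p'⁻¹ * (∫⁻ x, f x ^ p * v x ^ p'⁻¹ ∂μ) ^ p⁻¹ := by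
    refine (lintegral_congr_ae hsplit).trans_le ?_
    exact ENNReal.lintegral_mul_norm_pow_le (by fun_prop) (by fun_prop) hpp'.symm.inv_nonneg
      hpp'.inv_nonneg hpp'.symm.inv_add_inv_eq_one
  refine (ENNReal.rpow_le_rpow hHolder hpp'.nonneg).trans_eq ?_
  rw [ENNReal.mul_rpow_of_nonneg _ _ hpp'.nonneg, ENNReal.rpow_inv_rpow hpp'.ne_zero,
    ← ENNReal.rpow_mul, inv_mul_eq_div, hpp'.div_conj_eq_sub_one]

theorem rpow_inv_lintegral_const_mul_rpow {C : ℝ≥0∞} (hC : C ≠ ⊤) {m : ℝ} (hm : 0 < m)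
    (f : α → ℝ≥0∞) :
    (∫⁻ x, (C * f x) ^ m ∂μ) ^ m⁻¹ = C * (∫⁻ x, f x ^ m ∂μ) ^ m⁻¹ := by
  simp_rw [ENNReal.mul_rpow_of_nonneg C _ hm.le]
  rw [lintegral_const_mul' _ _ (ENNReal.rpow_ne_top_of_nonneg hm.le hC),
    ENNReal.mul_rpow_of_nonneg _ _ (inv_pos.2 hm).le, ENNReal.rpow_rpow_inv hm.ne']

end Integration

theorem lintegral_Ioc_ofReal_rpow {b x : ℝ} (hb : -1 < b) (hx : 0 ≤ x) :
    ∫⁻ t in Ioc 0 x, ENNReal.ofReal t ^ b = ENNReal.ofReal (x ^ (b + 1) / (b + 1)) := by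
  have hint : IntegrableOn (fun t : ℝ => t ^ b) (Ioc 0 x) :=
    (intervalIntegrable_iff_integrableOn_Ioc_of_le hx).1
      (intervalIntegral.intervalIntegrable_rpow' hb)
  have hnonneg : ∀ᵐ t ∂volume.restrict (Ioc 0 x), 0 ≤ t ^ b :=
    ae_restrict_of_forall_mem measurableSet_Ioc fun t ht => Real.rpow_nonneg ht.1.le b
  rw [setLIntegral_congr_fun measurableSet_Ioc fun t ht => ENNReal.ofReal_rpow_of_pos ht.1,
    ← ofReal_integral_eq_lintegral_ofReal hint hnonneg, ← intervalIntegral.integral_of_le hx,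
    integral_rpow (Or.inl hb), Real.zero_rpow (by linarith), sub_zero]

theorem hardy_constant_rpow_inv {p p' q : ℝ} (hpp' : p.HolderConjugate p') (hq : 0 < q)
    (B : ℝ≥0∞) :
    ((ENNReal.ofReal p' * B) ^ (p - 1) * (ENNReal.ofReal p ^ (q / p)⁻¹ * B)) ^ p⁻¹ =
      ENNReal.ofReal (p' ^ p'⁻¹ * p ^ q⁻¹) * B := by
  have hp := hpp'.pos
  have hp' := hpp'.symm.pos
  have hexp : (p - 1) * p⁻¹ = p'⁻¹ := by
    rw [← hpp'.div_conj_eq_sub_one]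
    field_simp
  calc ((ENNReal.ofReal p' * B) ^ (p - 1) * (ENNReal.ofReal p ^ (q / p)⁻¹ * B)) ^ p⁻¹
      = (ENNReal.ofReal p' * B) ^ p'⁻¹ * (ENNReal.ofReal p ^ q⁻¹ * B ^ p⁻¹) := by
        rw [ENNReal.mul_rpow_of_nonneg _ _ hpp'.inv_nonneg,
          ENNReal.mul_rpow_of_nonneg _ _ hpp'.inv_nonneg, ← ENNReal.rpow_mul, ← ENNReal.rpow_mul,
          hexp, show (q / p)⁻¹ * p⁻¹ = q⁻¹ by field_simp]
    _ = ENNReal.ofReal p' ^ p'⁻¹ * ENNReal.ofReal p ^ q⁻¹ * B := by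
        rw [ENNReal.mul_rpow_of_nonneg _ _ hpp'.symm.inv_nonneg, mul_mul_mul_comm,
          ← ENNReal.rpow_add_of_nonneg _ _ hpp'.symm.inv_nonneg hpp'.inv_nonneg,
          hpp'.symm.inv_add_inv_eq_one, ENNReal.rpow_one]
    _ = ENNReal.ofReal (p' ^ p'⁻¹ * p ^ q⁻¹) * B := by
        rw [ENNReal.ofReal_mul (by positivity), ENNReal.ofReal_rpow_of_pos hp',
          ENNReal.ofReal_rpow_of_pos hp]

theorem monotone_measure_Iic {α : Type*} [Preorder α] [MeasurableSpace α] (μ : Measure α) :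
    Monotone fun s => μ (Iic s) :=
  fun _ _ hst => measure_mono (Iic_subset_Iic.2 hst)

theorem antitone_measure_Ici {α : Type*} [Preorder α] [MeasurableSpace α] (μ : Measure α) :
    Antitone fun s => μ (Ici s) :=
  fun _ _ hst => measure_mono (Ici_subset_Ici.2 hst)

section LinearOrder

variable {α : Type*} [LinearOrder α] [TopologicalSpace α] [OrderTopology α]
  [SecondCountableTopology α] [MeasurableSpace α] {μ : Measure α} {D : Set α}

theorem measure_eq_biSup_measure_Iic (hD : IsLowerSet D) : μ D = ⨆ s ∈ D, μ (Iic s) := by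
  refine le_antisymm ?_ (iSup₂_le fun s hs => measure_mono (hD.Iic_subset hs))
  by_cases hmax : ∃ m, IsGreatest D m
  · obtain ⟨m, hmD, hm⟩ := hmax
    exact (measure_mono hm).trans (le_iSup₂ (f := fun s _ => μ (Iic s)) m hmD)
  · have hD_eq : D = ⋃ s ∈ D, Iio s := by
      refine Subset.antisymm (fun x hx => ?_) (iUnion₂_subset fun s hs y hy => hD (le_of_lt hy) hs)
      obtain ⟨y, hyD, hxy⟩ : ∃ y ∈ D, x < y := by
        by_contra! h
        exact hmax ⟨x, hx, h⟩
      exact mem_biUnion hyD hxy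
    obtain ⟨T, hTD, hT, hTU⟩ :=
      TopologicalSpace.isOpen_biUnion_countable D Iio fun _ _ => isOpen_Iio
    have hdir : DirectedOn ((· ⊆ ·) on Iio) T := fun s hs t ht =>
      (le_total s t).elim (fun hst => ⟨t, ht, Iio_subset_Iio hst, Subset.rfl⟩)
        fun hts => ⟨s, hs, Subset.rfl, Iio_subset_Iio hts⟩
    calc μ D = ⨆ s ∈ T, μ (Iio s) := by rw [hD_eq, ← hTU, measure_biUnion_eq_iSup hT hdir]
      _ ≤ ⨆ s ∈ D, μ (Iic s) :=
        (biSup_mono hTD).trans (iSup₂_mono fun s _ => measure_mono Iio_subset_Iic_self)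

theorem ae_measure_Iic_ne_zero : ∀ᵐ s ∂μ, μ (Iic s) ≠ 0 := by
  have hnull : IsLowerSet {s | μ (Iic s) = 0} := fun _ _ hba ha =>
    measure_mono_null (Iic_subset_Iic.2 hba) ha
  rw [ae_iff]
  simp only [ne_eq, not_not]
  rw [measure_eq_biSup_measure_Iic hnull]
  simp

theorem measure_eq_biSup_measure_Ici (hD : IsUpperSet D) : μ D = ⨆ s ∈ D, μ (Ici s) :=
  measure_eq_biSup_measure_Iic (α := αᵒᵈ) hD.toDual

theorem ae_measure_Ici_ne_zero : ∀ᵐ s ∂μ, μ (Ici s) ≠ 0 :=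
  ae_measure_Iic_ne_zero (α := αᵒᵈ)

variable {ν : Measure α} {B : ℝ≥0∞}

theorem measure_Ioi_rpow_mul_measure_Iic_rpow_le {a b : ℝ} (ha : 0 < a) (hb : 0 ≤ b)
    (hB : ∀ r, ν (Ici r) ^ a * μ (Iio r) ^ b ≤ B) (s : α) :
    ν (Ioi s) ^ a * μ (Iic s) ^ b ≤ B := by
  rw [measure_eq_biSup_measure_Ici (isUpperSet_Ioi s), ← ENNReal.orderIsoRpow_apply a ha,
    OrderIso.map_iSup₂]
  simp_rw [ENNReal.iSup_mul]
  refine iSup₂_le fun r hr => le_trans ?_ (hB r)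
  gcongr
  · rfl
  · exact hr

variable [BorelSpace α]

theorem setLIntegral_comp_measure_Iic_le (hD : IsLowerSet D) (hμD : μ D ≠ ⊤) {φ : ℝ≥0∞ → ℝ≥0∞}
    (hφ : Antitone φ) :
    ∫⁻ s in D, φ (μ (Iic s)) ∂μ ≤ ∫⁻ t in Ioc 0 (μ.real D), φ (ENNReal.ofReal t) := by
  have : IsFiniteMeasure (μ.restrict D) := isFiniteMeasure_restrict.2 hμD
  have hφμ : Antitone fun s => φ (μ (Iic s)) := hφ.comp_monotone (monotone_measure_Iic μ)
  rw [lintegral_eq_lintegral_measure_ofReal_lt hφμ.measurable,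
    lintegral_eq_lintegral_measure_ofReal_lt (f := fun t => φ (ENNReal.ofReal t))
      (hφ.measurable.comp ENNReal.measurable_ofReal)]
  refine lintegral_mono fun u => ?_
  have hlower : IsLowerSet ({s | ENNReal.ofReal u < φ (μ (Iic s))} ∩ D) := fun s t hts hs =>
    ⟨lt_of_lt_of_le hs.1 (hφμ hts), hD hts hs.2⟩
  rw [Measure.restrict_apply' hD.ordConnected.measurableSet,
    Measure.restrict_apply' measurableSet_Ioc, measure_eq_biSup_measure_Iic hlower]
  refine iSup₂_le fun s ⟨hus, hsD⟩ => ?_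
  have hsub : Iic s ⊆ D := hD.Iic_subset hsD
  have hs_top : μ (Iic s) ≠ ⊤ := measure_ne_top_of_subset hsub hμD
  calc μ (Iic s) = volume (Ioc 0 (μ.real (Iic s))) := by
        rw [Real.volume_Ioc, sub_zero, ofReal_measureReal hs_top]
    _ ≤ volume ({t | ENNReal.ofReal u < φ (ENNReal.ofReal t)} ∩ Ioc 0 (μ.real D)) :=
      measure_mono fun t ht =>
        ⟨lt_of_lt_of_le hus (hφ ((ENNReal.ofReal_le_iff_le_toReal hs_top).2 ht.2)),
          ht.1, ht.2.trans (measureReal_mono hsub hμD)⟩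

theorem setLIntegral_measure_Iic_rpow_neg_le (hD : IsLowerSet D) {a : ℝ} (ha₀ : 0 ≤ a)
    (ha₁ : a < 1) :
    ∫⁻ s in D, μ (Iic s) ^ (-a) ∂μ ≤ ENNReal.ofReal (1 - a)⁻¹ * μ D ^ (1 - a) := by
  have ha : 0 < 1 - a := sub_pos.2 ha₁
  rcases eq_or_ne (μ D) ⊤ with hμD | hμD
  · simp [hμD, ENNReal.top_rpow_of_pos ha, ENNReal.mul_top, ha]
  have hanti : Antitone fun x : ℝ≥0∞ => x ^ (-a) := fun x y hxy => by
    simpa only [ENNReal.rpow_neg] using ENNReal.inv_le_inv.2 (ENNReal.rpow_le_rpow hxy ha₀)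
  calc ∫⁻ s in D, μ (Iic s) ^ (-a) ∂μ
      ≤ ∫⁻ t in Ioc 0 (μ.real D), ENNReal.ofReal t ^ (-a) :=
        setLIntegral_comp_measure_Iic_le hD hμD hanti
    _ = ENNReal.ofReal ((1 - a)⁻¹ * μ.real D ^ (1 - a)) := by
        rw [lintegral_Ioc_ofReal_rpow (by linarith) measureReal_nonneg, neg_add_eq_sub,
          div_eq_inv_mul]
    _ = ENNReal.ofReal (1 - a)⁻¹ * μ D ^ (1 - a) := by
        rw [ENNReal.ofReal_mul (inv_nonneg.2 ha.le),
          ← ENNReal.ofReal_rpow_of_nonneg measureReal_nonneg ha.le, ofReal_measureReal hμD]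

theorem setLIntegral_measure_Ici_rpow_neg_le (hD : IsUpperSet D) {a : ℝ} (ha₀ : 0 ≤ a)
    (ha₁ : a < 1) :
    ∫⁻ s in D, μ (Ici s) ^ (-a) ∂μ ≤ ENNReal.ofReal (1 - a)⁻¹ * μ D ^ (1 - a) :=
  setLIntegral_measure_Iic_rpow_neg_le (α := αᵒᵈ) hD.toDual ha₀ ha₁

variable {f g w : α → ℝ≥0∞} {p p' q : ℝ}

theorem rpow_setLIntegral_le_of_isLowerSet (hD : IsLowerSet D) (hμD : μ D ≠ ⊤) (hf : Measurable f)
    (hpp' : p.HolderConjugate p') :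
    (∫⁻ s in D, f s ∂μ) ^ p ≤
      (ENNReal.ofReal p' * μ D ^ p'⁻¹) ^ (p - 1) *
        ∫⁻ s in D, f s ^ p * μ (Iic s) ^ p'⁻¹ ∂μ := by
  have hfinite : ∀ᵐ s ∂μ.restrict D, μ (Iic s) ≠ ⊤ :=
    ae_restrict_of_forall_mem hD.ordConnected.measurableSet fun s hs =>
      measure_ne_top_of_subset (hD.Iic_subset hs) hμD
  have hweight : ∫⁻ s in D, μ (Iic s) ^ (-p⁻¹) ∂μ ≤ ENNReal.ofReal p' * μ D ^ p'⁻¹ := by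
    simpa only [hpp'.one_sub_inv, inv_inv] using setLIntegral_measure_Iic_rpow_neg_le (μ := μ) hD
      hpp'.inv_nonneg (inv_lt_one_of_one_lt₀ hpp'.lt)
  refine (rpow_lintegral_le_rpow_mul_lintegral hpp' hf (monotone_measure_Iic μ).measurable
    (ae_restrict_of_ae ae_measure_Iic_ne_zero) hfinite).trans ?_
  gcongr
  exact hpp'.sub_one_pos.le

theorem minkowski_setLIntegral_Iio_le [SFinite μ] [SigmaFinite ν] (hg : Measurable g)
    (hw : Measurable w) {m : ℝ} (hm : 1 ≤ m) :
    (∫⁻ r, (w r * ∫⁻ s in Iio r, g s ∂μ) ^ m ∂ν) ^ m⁻¹ ≤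
      ∫⁻ s, g s * (∫⁻ r in Ioi s, w r ^ m ∂ν) ^ m⁻¹ ∂μ := by
  have hm₀ : 0 < m := by positivity
  have hlt : MeasurableSet {z : α × α | z.2 < z.1} :=
    measurableSet_lt measurable_snd measurable_fst
  let K : α → α → ℝ≥0∞ := fun r s =>
    {z : α × α | z.2 < z.1}.indicator (fun z => w z.1 * g z.2) (r, s)
  have hK : Measurable (uncurry K) :=
    Measurable.indicator (f := fun z : α × α => w z.1 * g z.2) (by fun_prop) hlt
  have hK_left (r : α) : ∫⁻ s, K r s ∂μ = w r * ∫⁻ s in Iio r, g s ∂μ := by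
    rw [← lintegral_const_mul _ hg, ← lintegral_indicator measurableSet_Iio]
    rfl
  have hK_right (s : α) :
      (∫⁻ r, K r s ^ m ∂ν) ^ m⁻¹ = g s * (∫⁻ r in Ioi s, w r ^ m ∂ν) ^ m⁻¹ := by
    have hKm (r : α) : K r s ^ m = (Ioi s).indicator (fun r => w r ^ m * g s ^ m) r := by
      by_cases hsr : s < r <;>
        simp [K, hsr, ENNReal.mul_rpow_of_nonneg, ENNReal.zero_rpow_of_pos, hm₀, hm₀.le]
    simp_rw [hKm]
    rw [lintegral_indicator measurableSet_Ioi, lintegral_mul_const _ (by fun_prop),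
      ENNReal.mul_rpow_of_nonneg _ _ (by positivity), ENNReal.rpow_rpow_inv hm₀.ne', mul_comm]
  simpa only [hK_left, hK_right] using minkowski_lintegral_le (μ := μ) (ν := ν) hK hm

theorem ae_rpow_setLIntegral_Iio_le (hf : Measurable f) (hpp' : p.HolderConjugate p') (hq : 0 < q)
    (hB : ∀ r, ν (Ici r) ^ q⁻¹ * μ (Iio r) ^ p'⁻¹ ≤ B) (hB_top : B ≠ ⊤) :
    ∀ᵐ r ∂ν, (∫⁻ s in Iio r, f s ∂μ) ^ p ≤ (ENNReal.ofReal p' * B) ^ (p - 1) *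
      ((ν (Ici r) ^ (-q⁻¹)) ^ (p - 1) * ∫⁻ s in Iio r, f s ^ p * μ (Iic s) ^ p'⁻¹ ∂μ) := by
  filter_upwards [ae_measure_Ici_ne_zero] with r hr
  have hνq : ν (Ici r) ^ q⁻¹ ≠ 0 := by simp [ENNReal.rpow_eq_zero_iff, hr, hq, hq.le]
  have hμr : μ (Iio r) ^ p'⁻¹ ≤ B * ν (Ici r) ^ (-q⁻¹) := by
    rw [ENNReal.rpow_neg, ← div_eq_mul_inv,
      ENNReal.le_div_iff_mul_le (Or.inl hνq) (Or.inr hB_top), mul_comm]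
    exact hB r
  have hμr_top : μ (Iio r) ≠ ⊤ := fun h => hB_top <| top_le_iff.1 <| by
    simpa [h, ENNReal.top_rpow_of_pos hpp'.symm.inv_pos, ENNReal.mul_top hνq] using hB r
  refine (rpow_setLIntegral_le_of_isLowerSet (isLowerSet_Iio r) hμr_top hf hpp').trans ?_
  rw [← mul_assoc, ← ENNReal.mul_rpow_of_nonneg _ _ hpp'.sub_one_pos.le, mul_assoc _ B]
  gcongr
  exact hpp'.sub_one_pos.le

theorem measure_Iic_rpow_mul_setLIntegral_Ioi_le (hpp' : p.HolderConjugate p') (hq : 0 < q)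
    (hB : ∀ r, ν (Ici r) ^ q⁻¹ * μ (Iio r) ^ p'⁻¹ ≤ B) (s : α) :
    μ (Iic s) ^ p'⁻¹ * (∫⁻ r in Ioi s, ν (Ici r) ^ (-p'⁻¹) ∂ν) ^ (q / p)⁻¹ ≤
      ENNReal.ofReal p ^ (q / p)⁻¹ * B := by
  have hp := hpp'.pos
  have htail : ∫⁻ r in Ioi s, ν (Ici r) ^ (-p'⁻¹) ∂ν ≤ ENNReal.ofReal p * ν (Ioi s) ^ p⁻¹ := by
    simpa only [hpp'.symm.one_sub_inv, inv_inv] using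
      setLIntegral_measure_Ici_rpow_neg_le (μ := ν) (isUpperSet_Ioi s)
        hpp'.symm.inv_nonneg (inv_lt_one_of_one_lt₀ hpp'.symm.lt)
  calc μ (Iic s) ^ p'⁻¹ * (∫⁻ r in Ioi s, ν (Ici r) ^ (-p'⁻¹) ∂ν) ^ (q / p)⁻¹
      ≤ μ (Iic s) ^ p'⁻¹ * (ENNReal.ofReal p * ν (Ioi s) ^ p⁻¹) ^ (q / p)⁻¹ := by gcongr
    _ = ENNReal.ofReal p ^ (q / p)⁻¹ * (ν (Ioi s) ^ q⁻¹ * μ (Iic s) ^ p'⁻¹) := by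
        rw [ENNReal.mul_rpow_of_nonneg _ _ (by positivity), ← ENNReal.rpow_mul,
          show p⁻¹ * (q / p)⁻¹ = q⁻¹ by field_simp]
        ring
    _ ≤ ENNReal.ofReal p ^ (q / p)⁻¹ * B := by
        gcongr
        exact measure_Ioi_rpow_mul_measure_Iic_rpow_le (inv_pos.2 hq) hpp'.symm.inv_nonneg hB s

theorem rpow_lintegral_rpow_setLIntegral_Iio_le [SFinite μ] [SigmaFinite ν] (hf : Measurable f)
    (hpp' : p.HolderConjugate p') (hpq : p ≤ q)
    (hB : ∀ r, ν (Ici r) ^ q⁻¹ * μ (Iio r) ^ p'⁻¹ ≤ B) (hB_top : B ≠ ⊤) :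
    (∫⁻ r, (∫⁻ s in Iio r, f s ∂μ) ^ q ∂ν) ^ (q / p)⁻¹ ≤
      (ENNReal.ofReal p' * B) ^ (p - 1) * (ENNReal.ofReal p ^ (q / p)⁻¹ * B) *
        ∫⁻ s, f s ^ p ∂μ := by
  have hp := hpp'.pos
  have hq : 0 < q := hp.trans_le hpq
  have hM : Measurable fun s => μ (Iic s) := (monotone_measure_Iic μ).measurable
  have hN : Measurable fun r => ν (Ici r) := (antitone_measure_Ici ν).measurable
  have hexp (r : α) : ((ν (Ici r) ^ (-q⁻¹)) ^ (p - 1)) ^ (q / p) = ν (Ici r) ^ (-p'⁻¹) := by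
    rw [← ENNReal.rpow_mul, ← ENNReal.rpow_mul, ← hpp'.div_conj_eq_sub_one]
    congr 1
    field_simp
  set C := (ENNReal.ofReal p' * B) ^ (p - 1)
  have hC_top : C ≠ ⊤ := ENNReal.rpow_ne_top_of_nonneg hpp'.sub_one_pos.le
    (ENNReal.mul_ne_top ENNReal.ofReal_ne_top hB_top)
  calc (∫⁻ r, (∫⁻ s in Iio r, f s ∂μ) ^ q ∂ν) ^ (q / p)⁻¹
      = (∫⁻ r, ((∫⁻ s in Iio r, f s ∂μ) ^ p) ^ (q / p) ∂ν) ^ (q / p)⁻¹ := by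
        simp_rw [← ENNReal.rpow_mul, mul_div_cancel₀ q hp.ne']
    _ ≤ (∫⁻ r, (C * ((ν (Ici r) ^ (-q⁻¹)) ^ (p - 1) *
          ∫⁻ s in Iio r, f s ^ p * μ (Iic s) ^ p'⁻¹ ∂μ)) ^ (q / p) ∂ν) ^ (q / p)⁻¹ := by
        gcongr ?_ ^ _
        refine lintegral_mono_ae ?_
        filter_upwards [ae_rpow_setLIntegral_Iio_le hf hpp' hq hB hB_top] with r hr
        gcongr
    _ = C * (∫⁻ r, ((ν (Ici r) ^ (-q⁻¹)) ^ (p - 1) *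
          ∫⁻ s in Iio r, f s ^ p * μ (Iic s) ^ p'⁻¹ ∂μ) ^ (q / p) ∂ν) ^ (q / p)⁻¹ :=
        rpow_inv_lintegral_const_mul_rpow hC_top (by positivity) _
    _ ≤ C * ∫⁻ s, f s ^ p * μ (Iic s) ^ p'⁻¹ *
          (∫⁻ r in Ioi s, ν (Ici r) ^ (-p'⁻¹) ∂ν) ^ (q / p)⁻¹ ∂μ := by
        simp_rw [← hexp]
        gcongr
        exact minkowski_setLIntegral_Iio_le ((hf.pow_const _).mul (hM.pow_const _))
          ((hN.pow_const _).pow_const _) ((one_le_div₀ hp).2 hpq)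
    _ ≤ C * ∫⁻ s, ENNReal.ofReal p ^ (q / p)⁻¹ * B * f s ^ p ∂μ := by
        refine mul_le_mul_right (lintegral_mono fun s => ?_) C
        rw [mul_assoc, mul_comm]
        exact mul_le_mul_left (measure_Iic_rpow_mul_setLIntegral_Ioi_le hpp' hq hB s) _
    _ = C * (ENNReal.ofReal p ^ (q / p)⁻¹ * B) * ∫⁻ s, f s ^ p ∂μ := by
        rw [lintegral_const_mul _ (by fun_prop), ← mul_assoc]

theorem hardy_inequality_diffuse_compact_general [SFinite μ] [SigmaFinite ν] (hf : Measurable f)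
    (hpp' : p.HolderConjugate p') (hpq : p ≤ q)
    (hB : ∀ r, ν (Ici r) ^ q⁻¹ * μ (Iio r) ^ p'⁻¹ ≤ B) (hB_top : B ≠ ⊤) :
    (∫⁻ r, (∫⁻ s in Iio r, f s ∂μ) ^ q ∂ν) ^ q⁻¹ ≤
      ENNReal.ofReal (p' ^ p'⁻¹ * p ^ q⁻¹) * B * (∫⁻ s, f s ^ p ∂μ) ^ p⁻¹ := by
  have hp := hpp'.pos
  have hq : 0 < q := hp.trans_le hpq
  calc (∫⁻ r, (∫⁻ s in Iio r, f s ∂μ) ^ q ∂ν) ^ q⁻¹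
      = ((∫⁻ r, (∫⁻ s in Iio r, f s ∂μ) ^ q ∂ν) ^ (q / p)⁻¹) ^ p⁻¹ := by
        rw [← ENNReal.rpow_mul, show (q / p)⁻¹ * p⁻¹ = q⁻¹ by field_simp]
    _ ≤ ((ENNReal.ofReal p' * B) ^ (p - 1) * (ENNReal.ofReal p ^ (q / p)⁻¹ * B) *
          ∫⁻ s, f s ^ p ∂μ) ^ p⁻¹ :=
        ENNReal.rpow_le_rpow
          (rpow_lintegral_rpow_setLIntegral_Iio_le hf hpp' hpq hB hB_top) hpp'.inv_nonneg
    _ = ENNReal.ofReal (p' ^ p'⁻¹ * p ^ q⁻¹) * B * (∫⁻ s, f s ^ p ∂μ) ^ p⁻¹ := by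
        rw [ENNReal.mul_rpow_of_nonneg _ _ hpp'.inv_nonneg, hardy_constant_rpow_inv hpp' hq B]

end LinearOrder

/-- One-variable Hardy inequality for diffuse, compactly supported finite Borel measures,
with constant `(p')^(1/p') p^(1/q)`. -/
theorem hardy_inequality_diffuse_compact
    (μ₁ μ₂ : Measure ℝ) [IsFiniteMeasure μ₁] [IsFiniteMeasure μ₂]
    (hd₁ : ∀ x : ℝ, μ₁ {x} = 0) (hd₂ : ∀ x : ℝ, μ₂ {x} = 0)
    (K₁ K₂ : Set ℝ) (hK₁ : IsCompact K₁) (hK₂ : IsCompact K₂)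
    (hμ₁K : μ₁ K₁ᶜ = 0) (hμ₂K : μ₂ K₂ᶜ = 0)
    (p q p' : ℝ) (hp : 1 < p) (hpq : p ≤ q) (hp' : p' = p / (p - 1))
    (B : ℝ≥0∞)
    (hB : B = ⨆ r : ℝ, μ₂ (Set.Ici r) ^ (1 / q) * μ₁ (Set.Iio r) ^ (1 / p'))
    (hBfin : B ≠ ⊤) :
    ∀ f : ℝ → ℝ≥0∞, Measurable f →
      (∫⁻ r, (∫⁻ s in Set.Iio r, f s ∂μ₁) ^ q ∂μ₂) ^ (1 / q) ≤
        ENNReal.ofReal (p' ^ (1 / p') * p ^ (1 / q)) * B *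
          (∫⁻ s, f s ^ p ∂μ₁) ^ (1 / p) := by
  simp only [one_div] at hB ⊢
  exact fun f hf => hardy_inequality_diffuse_compact_general hf
    ((Real.holderConjugate_iff_eq_conjExponent hp).2 hp') hpq (iSup_le_iff.1 hB.ge) hBfin
end
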